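/- (Speed of evolution under constraints cannot exceed ω.) Let H and G be Hermitian N×N complex matrices, ψ ∈ ℂ^N a unit vector, λ₀ a nonzero real number, ω ≥ 0 a real number, and set F := λ₀·(H + G) and P := ψψ*. Assume Tr H = 0, Tr G = 0, Tr(H·G) = 0, Tr(H²) = 2ω², and F·P + P·F = F. Then Var_ψ(H) = ω² − ((1/2)·Tr(G²) − Var_ψ(G)), and consequently Var_ψ(H) ≤ ω². -/

import Mathlib

open Matrix

theorem aux_trace_mul_P {N : ℕ} (ψ : Fin N → ℂ) (A : Matrix (Fin N) (Fin N) ℂ) :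
    (A * vecMulVec ψ (star ψ)).trace = star ψ ⬝ᵥ (A *ᵥ ψ) := by
  rw [mul_vecMulVec, trace_vecMulVec, dotProduct_comm]

theorem aux_P_mul_P {N : ℕ} (ψ : Fin N → ℂ) (A : Matrix (Fin N) (Fin N) ℂ) :
    vecMulVec ψ (star ψ) * (A * vecMulVec ψ (star ψ)) =
      (star ψ ⬝ᵥ (A *ᵥ ψ)) • vecMulVec ψ (star ψ) := by
  rw [mul_vecMulVec, vecMulVec_mul_vecMulVec]
  ext i j
  simp [vecMulVec_apply]
  ring

theorem aux_herm {N : ℕ} (ψ : Fin N → ℂ) (A : Matrix (Fin N) (Fin N) ℂ) (hA : A.IsHermitian) :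
    (star ψ ⬝ᵥ (A *ᵥ ψ)).im = 0 := hA.im_star_dotProduct_mulVec_self ψ

open scoped ComplexOrder in
theorem aux_ineq {N : ℕ} (ψ : Fin N → ℂ) (hψ : star ψ ⬝ᵥ ψ = 1)
    (G : Matrix (Fin N) (Fin N) ℂ) (hG : G.IsHermitian) :
    0 ≤ (G * G).trace - 2 * (star ψ ⬝ᵥ ((G * G) *ᵥ ψ)) + (star ψ ⬝ᵥ (G *ᵥ ψ)) ^ 2 := by
  have h1 := aux_trace_mul_P ψ (G * G)
  have h2 := aux_P_mul_P ψ G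
  have h3 := aux_P_mul_P ψ 1
  have h4 := aux_trace_mul_P ψ G
  have hP : (vecMulVec ψ (star ψ))ᴴ = vecMulVec ψ (star ψ) := by
    ext i j; simp [vecMulVec_apply, mul_comm]
  simp only [one_mul, one_mulVec, hψ, one_smul] at h3
  set P := vecMulVec ψ (star ψ) with hPdef
  set g := star ψ ⬝ᵥ (G *ᵥ ψ)
  have hQ : (1 - P) * (1 - P) = 1 - P := by
    simp [mul_sub, sub_mul, h3]
  have hp := (posSemidef_conjTranspose_mul_self ((1 - P) * G * (1 - P))).trace_nonneg
  have hX : ((1 - P) * G * (1 - P))ᴴ = (1 - P) * G * (1 - P) := by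
    simp [conjTranspose_mul, hP, hG.eq, Matrix.mul_assoc]
  have key : ((1 - P) * G * (1 - P) * ((1 - P) * G * (1 - P))).trace =
      ((1 - P) * (G * ((1 - P) * G))).trace := by
    calc _ = ((1 - P) * G * ((1 - P) * (1 - P)) * G * (1 - P)).trace := by
            simp only [Matrix.mul_assoc]
      _ = ((1 - P) * ((1 - P) * G * (1 - P) * G)).trace := by
            rw [hQ, Matrix.trace_mul_comm]
      _ = ((1 - P) * (1 - P) * (G * ((1 - P) * G))).trace := by
            simp only [Matrix.mul_assoc]
      _ = _ := by rw [hQ]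
  rw [hX, key] at hp
  have e : (1 - P) * (G * ((1 - P) * G)) = G * G - P * (G * G) - G * (P * G) + P * (G * P) * G := by
    noncomm_ring
  have t1 : (P * (G * G)).trace = star ψ ⬝ᵥ ((G * G) *ᵥ ψ) := by rw [Matrix.trace_mul_comm, h1]
  have t2 : (G * (P * G)).trace = star ψ ⬝ᵥ ((G * G) *ᵥ ψ) := by
    rw [Matrix.trace_mul_comm, Matrix.mul_assoc, t1]
  have t3 : (P * (G * P) * G).trace = g ^ 2 := by
    rw [h2, smul_mul_assoc, trace_smul, Matrix.trace_mul_comm, h4, smul_eq_mul, sq]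
  rw [e, trace_add, trace_sub, trace_sub, t1, t2, t3] at hp
  convert hp using 1
  ring

/-- Speed of evolution under constraints cannot exceed `ω`:
with `F = λ₀(H+G)`, `P = ψψ*`, `Tr H = Tr G = Tr(HG) = 0`, `Tr H² = 2ω²`, and
`FP + PF = F`, one has `Var_ψ(H) = ω² − ((1/2)Tr G² − Var_ψ(G))`, hence `Var_ψ(H) ≤ ω²`. -/
theorem speed_of_evolution_le_omega {N : ℕ}
    (H G : Matrix (Fin N) (Fin N) ℂ) (hH : H.IsHermitian) (hG : G.IsHermitian)
    (ψ : Fin N → ℂ) (hψ : star ψ ⬝ᵥ ψ = 1)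
    (lam0 : ℝ) (hlam0 : lam0 ≠ 0) (ω : ℝ) (hω : 0 ≤ ω)
    (F : Matrix (Fin N) (Fin N) ℂ) (hFdef : F = (lam0 : ℂ) • (H + G))
    (htrH : H.trace = 0) (htrG : G.trace = 0) (htrHG : (H * G).trace = 0)
    (htrH2 : (H * H).trace = 2 * (ω : ℂ) ^ 2)
    (hF : F * vecMulVec ψ (star ψ) + vecMulVec ψ (star ψ) * F = F) :
    star ψ ⬝ᵥ ((H * H) *ᵥ ψ) - (star ψ ⬝ᵥ (H *ᵥ ψ)) ^ 2 =
      (ω : ℂ) ^ 2 - ((1 / 2) * (G * G).trace -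
        (star ψ ⬝ᵥ ((G * G) *ᵥ ψ) - (star ψ ⬝ᵥ (G *ᵥ ψ)) ^ 2)) ∧
    (star ψ ⬝ᵥ ((H * H) *ᵥ ψ) - (star ψ ⬝ᵥ (H *ᵥ ψ)) ^ 2).im = 0 ∧
    (star ψ ⬝ᵥ ((H * H) *ᵥ ψ) - (star ψ ⬝ᵥ (H *ᵥ ψ)) ^ 2).re ≤ ω ^ 2 := by
  have hK : (H + G) * vecMulVec ψ (star ψ) + vecMulVec ψ (star ψ) * (H + G) = H + G := by
    have hl : (lam0 : ℂ) ≠ 0 := by exact_mod_cast hlam0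
    rw [hFdef, smul_mul_assoc, mul_smul_comm, ← smul_add] at hF
    exact smul_right_injective _ hl hF
  have hHH := aux_trace_mul_P ψ (H * H)
  have hGG := aux_trace_mul_P ψ (G * G)
  have hH1 := aux_trace_mul_P ψ H
  have hG1 := aux_trace_mul_P ψ G
  have hineq := aux_ineq ψ hψ G hG
  have imH := aux_herm ψ H hH
  have imG := aux_herm ψ G hG
  have imHH := aux_herm ψ (H * H) (by rw [IsHermitian, conjTranspose_mul, hH.eq])
  set P := vecMulVec ψ (star ψ) with hPdef
  set a := star ψ ⬝ᵥ (H *ᵥ ψ)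
  set b := star ψ ⬝ᵥ (G *ᵥ ψ)
  set c := star ψ ⬝ᵥ ((H * H) *ᵥ ψ)
  set d := star ψ ⬝ᵥ ((G * G) *ᵥ ψ)
  have k0 : a + b = 0 := by
    have := congrArg trace hK
    rw [trace_add, Matrix.trace_mul_comm P, add_mul, trace_add, trace_add, hH1, hG1, htrH,
      htrG] at this
    linear_combination this / 2
  have gen : ∀ X : Matrix (Fin N) (Fin N) ℂ,
      (X * H * P).trace + (X * G * P).trace + ((H * X * P).trace + (G * X * P).trace) =
        (X * H).trace + (X * G).trace := by
    intro X
    have := congrArg (fun M => (X * M).trace) hK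
    simp only [mul_add, add_mul, trace_add, ← Matrix.mul_assoc] at this
    have r : ∀ Y : Matrix (Fin N) (Fin N) ℂ, (X * P * Y).trace = (Y * X * P).trace := by
      intro Y
      rw [Matrix.trace_mul_comm, Matrix.mul_assoc]
    rw [r, r] at this
    exact this
  have kH := gen H
  have kG := gen G
  rw [hHH, htrH2, htrHG] at kH
  rw [hGG, Matrix.trace_mul_comm G H, htrHG] at kG
  have main : c - a ^ 2 = (ω : ℂ) ^ 2 - ((1 / 2) * (G * G).trace - (d - b ^ 2)) := by
    linear_combination (kH - kG) / 2 - (a - b) * k0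
  have bsq : 0 ≤ (b ^ 2).re := by
    simp only [sq, Complex.mul_re, imG]
    nlinarith [mul_self_nonneg b.re]
  refine ⟨main, ?_, ?_⟩
  · simp [sq, imH, imHH]
  · have h5 : c - a ^ 2 = ((ω ^ 2 : ℝ) : ℂ) -
        ((1 / 2 : ℝ) : ℂ) * ((G * G).trace - 2 * d + b ^ 2) - ((1 / 2 : ℝ) : ℂ) * b ^ 2 := by
      rw [main]; push_cast; ring
    have h6 := (Complex.le_def.1 hineq).1
    rw [h5, Complex.sub_re, Complex.sub_re, Complex.re_ofReal_mul, Complex.re_ofReal_mul,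
      Complex.ofReal_re]
    simp only [Complex.zero_re] at h6
    linarith
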